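/- Let m ≥ 2 and let k₁,…,k_{m−1} be positive integers. Then for every complex z with |z| < 1, the multiple polylogarithm with last index 1 satisfies d/dz Li_{k₁,…,k_{m−1},1}(z) = (1/(1−z)) · Li_{k₁,…,k_{m−1}}(z), i.e. the function z ↦ Li_{k₁,…,k_{m−1},1}(z) has derivative Li_{k₁,…,k_{m−1}}(z)/(1−z) at every z in the open unit disc. -/

import Mathlib

/-!
Write the largest index of a tuple in the sum for `Li_{k₁,…,k_{m-1},1}` as `n_m = n_{m-1} + j + 1`
with `j ≥ 0`. Differentiating `z ^ n_m / n_m` gives `z ^ n_{m-1} * z ^ j`, so the differentiated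
series is the product of the series of `Li_{k₁,…,k_{m-1}}` and the geometric series in `j`.
Termwise differentiation is legitimate because, on a disc of radius `r < 1`, the same factorization
with `r` in place of `z` gives a summable majorant.
-/

/-- Index type for multiple polylogarithm sums: strictly increasing tuples of
positive integers `0 < n₁ < ⋯ < n_{m+1}`. -/
def MPLIdx (m : ℕ) : Type :=
  {f : Fin (m + 1) → ℕ // StrictMono f ∧ ∀ i, 0 < f i}

/-- The one-variable multiple polylogarithm
`Li_{k₁,…,k_{m+1}}(z) = Σ_{0<n₁<⋯<n_{m+1}} z^{n_{m+1}}/(n₁^{k₁}⋯n_{m+1}^{k_{m+1}})`. -/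
noncomputable def MPL (m : ℕ) (k : Fin (m + 1) → ℕ) (z : ℂ) : ℂ :=
  ∑' n : MPLIdx m, z ^ (n.1 (Fin.last m)) / ∏ i, ((n.1 i : ℂ)) ^ k i

section PowerSeries

variable {ι : Type*}

lemma summable_mul_pow_add {a : ι → ℝ} {d : ι → ℕ} {r : ℝ} (ha : ∀ i, 0 ≤ a i)
    (hr₀ : 0 ≤ r) (hr₁ : r < 1) (hsum : Summable fun i => a i * r ^ d i) :
    Summable fun p : ι × ℕ => a p.1 * r ^ (d p.1 + p.2) := by
  simp only [pow_add, ← mul_assoc]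
  exact hsum.mul_of_nonneg (summable_geometric_of_lt_one hr₀ hr₁)
    (fun i => mul_nonneg (ha i) (pow_nonneg hr₀ _)) (fun _ => pow_nonneg hr₀ _)

lemma tsum_mul_pow_add {𝕜 : Type*} [NormedField 𝕜] [CompleteSpace 𝕜] {a : ι → 𝕜} {d : ι → ℕ}
    {z : 𝕜} (hz : ‖z‖ < 1) (hsum : Summable fun i => ‖a i * z ^ d i‖) :
    ∑' p : ι × ℕ, a p.1 * z ^ (d p.1 + p.2) = (∑' i, a i * z ^ d i) / (1 - z) := by
  simp only [pow_add, ← mul_assoc]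
  rw [div_eq_mul_inv, ← tsum_geometric_of_norm_lt_one hz,
    tsum_mul_tsum_of_summable_norm hsum (summable_norm_geometric_of_norm_lt_one hz)]

lemma hasDerivAt_pow_succ_div {𝕜 : Type*} [NontriviallyNormedField 𝕜] [CharZero 𝕜] (n : ℕ)
    (z : 𝕜) : HasDerivAt (fun w => w ^ (n + 1) / ((n + 1 : ℕ) : 𝕜)) (z ^ n) z := by
  have hn : ((n + 1 : ℕ) : 𝕜) ≠ 0 := Nat.cast_ne_zero.2 n.succ_ne_zero
  simpa only [Nat.add_sub_cancel, mul_div_cancel_left₀ _ hn] using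
    (hasDerivAt_pow (n + 1) z).div_const ((n + 1 : ℕ) : 𝕜)

lemma hasDerivAt_tsum_mul_pow_succ_div {𝕜 : Type*} [RCLike 𝕜] {a : ι → 𝕜} {d : ι → ℕ} {r : ℝ}
    {z : 𝕜} (hsum : Summable fun i => ‖a i‖ * r ^ d i) (hr : r < 1) (hz : ‖z‖ < r) :
    HasDerivAt
      (fun w => ∑' p : ι × ℕ, a p.1 * (w ^ (d p.1 + p.2 + 1) / ((d p.1 + p.2 + 1 : ℕ) : 𝕜)))
      ((∑' i, a i * z ^ d i) / (1 - z)) z := by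
  have hr₀ : 0 < r := (norm_nonneg z).trans_lt hz
  have norm_term_le (i : ι) (n : ℕ) (w : 𝕜) (hw : ‖w‖ ≤ r) : ‖a i * w ^ n‖ ≤ ‖a i‖ * r ^ n := by
    rw [norm_mul, norm_pow]
    gcongr
  have hsum_z : Summable fun i => ‖a i * z ^ d i‖ :=
    hsum.of_nonneg_of_le (fun _ => norm_nonneg _) fun i => norm_term_le i _ z hz.le
  rw [← tsum_mul_pow_add (hz.trans hr) hsum_z]
  refine hasDerivAt_tsum_of_isPreconnected (t := Metric.ball 0 r) (y₀ := 0)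
    (summable_mul_pow_add (fun i => norm_nonneg (a i)) hr₀.le hr hsum) Metric.isOpen_ball
    (convex_ball 0 r).isPreconnected
    (fun p w _ => (hasDerivAt_pow_succ_div (d p.1 + p.2) w).const_mul (a p.1))
    (fun p w hw => norm_term_le p.1 _ w (mem_ball_zero_iff.1 hw).le)
    (Metric.mem_ball_self hr₀) ?_ (mem_ball_zero_iff.2 hz)
  simp

end PowerSeries

lemma strictMono_fin_snoc {α : Type*} [Preorder α] {n : ℕ} {f : Fin (n + 1) → α} {a : α}
    (hf : StrictMono f) (ha : f (Fin.last n) < a) :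
    StrictMono (Fin.snoc f a : Fin (n + 2) → α) := by
  rw [Fin.strictMono_iff_lt_succ, Fin.forall_fin_succ']
  refine ⟨fun i => ?_, ?_⟩
  · rw [Fin.succ_castSucc, Fin.snoc_castSucc, Fin.snoc_castSucc]
    exact hf Fin.castSucc_lt_succ
  · rwa [Fin.succ_last, Fin.snoc_last, Fin.snoc_castSucc]

namespace MPLIdx

variable {m : ℕ}

/-- The tuple `n₁ < ⋯ < n_{m+1}` obtained from `n₁ < ⋯ < n_{m+2}` by dropping the largest entry. -/
def init (n : MPLIdx (m + 1)) : MPLIdx m :=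
  ⟨Fin.init n.1, n.2.1.comp Fin.strictMono_castSucc, fun i => n.2.2 i.castSucc⟩

/-- The tuple obtained from `n₁ < ⋯ < n_{m+1}` by appending `n_{m+1} + j + 1`; parametrizing the new
entry by its gap `j` lets `j` range over all of `ℕ`, independently of the tuple. -/
def snoc (n : MPLIdx m) (j : ℕ) : MPLIdx (m + 1) :=
  ⟨Fin.snoc n.1 (n.1 (Fin.last m) + j + 1), strictMono_fin_snoc n.2.1 (by lia),
    Fin.forall_fin_succ'.2 ⟨fun i => by simpa only [Fin.snoc_castSucc] using n.2.2 i,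
      by simp only [Fin.snoc_last, Nat.succ_pos]⟩⟩

@[simp]
lemma snoc_last (n : MPLIdx m) (j : ℕ) :
    (n.snoc j).1 (Fin.last (m + 1)) = n.1 (Fin.last m) + j + 1 :=
  Fin.snoc_last (α := fun _ => ℕ) _ _

@[simp]
lemma init_snoc (n : MPLIdx m) (j : ℕ) : (n.snoc j).init = n :=
  Subtype.ext (Fin.init_snoc (α := fun _ => ℕ) _ _)

lemma init_last_lt_last (n : MPLIdx (m + 1)) :
    n.init.1 (Fin.last m) < n.1 (Fin.last (m + 1)) :=
  n.2.1 (Fin.castSucc_lt_last _)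

/-- Tuples of length `m + 2` correspond to tuples of length `m + 1` together with the gap before the
appended entry, via `MPLIdx.snoc`. -/
def snocEquiv (m : ℕ) : MPLIdx m × ℕ ≃ MPLIdx (m + 1) where
  toFun p := p.1.snoc p.2
  invFun n := (n.init, n.1 (Fin.last (m + 1)) - n.init.1 (Fin.last m) - 1)
  left_inv p := Prod.ext (init_snoc _ _) (by simp only [snoc_last, init_snoc]; lia)
  right_inv n := by
    have hlast : n.init.1 (Fin.last m) + (n.1 (Fin.last (m + 1)) - n.init.1 (Fin.last m) - 1) + 1 =
        n.1 (Fin.last (m + 1)) := by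
      have := n.init_last_lt_last
      lia
    refine Subtype.ext ?_
    simp only [snoc, hlast]
    exact Fin.snoc_init_self n.1

lemma tsum_eq_tsum_snoc {E : Type*} [AddCommMonoid E] [TopologicalSpace E]
    (f : MPLIdx (m + 1) → E) : ∑' n, f n = ∑' p : MPLIdx m × ℕ, f (p.1.snoc p.2) :=
  ((snocEquiv m).tsum_eq f).symm

lemma summable_iff_summable_snoc {E : Type*} [AddCommMonoid E] [TopologicalSpace E]
    {f : MPLIdx (m + 1) → E} : Summable f ↔ Summable fun p : MPLIdx m × ℕ => f (p.1.snoc p.2) :=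
  (snocEquiv m).summable_iff.symm

lemma summable_pow_last {r : ℝ} (hr₀ : 0 ≤ r) (hr₁ : r < 1) (m : ℕ) :
    Summable fun n : MPLIdx m => r ^ n.1 (Fin.last m) := by
  induction m with
  | zero =>
    have last_injective : Function.Injective fun n : MPLIdx 0 => n.1 (Fin.last 0) :=
      fun n n' h => Subtype.ext (funext (Fin.forall_fin_one.2 h))
    exact (summable_geometric_of_lt_one hr₀ hr₁).comp_injective last_injective
  | succ m ih =>
    have hprod : Summable fun p : MPLIdx m × ℕ => 1 * r ^ (p.1.1 (Fin.last m) + p.2) :=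
      summable_mul_pow_add (a := fun _ => 1) (d := fun n : MPLIdx m => n.1 (Fin.last m))
        (fun _ => zero_le_one) hr₀ hr₁ (by simpa only [one_mul] using ih)
    refine summable_iff_summable_snoc.2 ((hprod.mul_left r).congr fun p => ?_)
    rw [snoc_last]
    ring

end MPLIdx

theorem mpl_hasDerivAt_of_last_eq_one_general {𝕜 : Type*} [RCLike 𝕜] {m : ℕ} {c : MPLIdx m → 𝕜}
    {r : ℝ} {z : 𝕜} (hc : Summable fun n => ‖c n‖ * r ^ n.1 (Fin.last m)) (hr : r < 1)
    (hz : ‖z‖ < r) :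
    HasDerivAt
      (fun w => ∑' n : MPLIdx (m + 1),
        c n.init / (n.1 (Fin.last (m + 1)) : 𝕜) * w ^ n.1 (Fin.last (m + 1)))
      ((∑' n, c n * z ^ n.1 (Fin.last m)) / (1 - z)) z := by
  simp only [MPLIdx.tsum_eq_tsum_snoc, MPLIdx.init_snoc, MPLIdx.snoc_last, div_mul_eq_mul_div,
    mul_div_assoc]
  exact hasDerivAt_tsum_mul_pow_succ_div hc hr hz

section Coefficients

variable {m : ℕ}

/-- The coefficient `1/(n₁^{k₁}⋯n_{m+1}^{k_{m+1}})` of `z ^ n_{m+1}` in the series `MPL m k z`. -/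
noncomputable def mplCoeff (k : Fin (m + 1) → ℕ) (n : MPLIdx m) : ℂ :=
  (∏ i, (n.1 i : ℂ) ^ k i)⁻¹

lemma MPL_eq_tsum_mplCoeff (k : Fin (m + 1) → ℕ) :
    MPL m k = fun z => ∑' n : MPLIdx m, mplCoeff k n * z ^ n.1 (Fin.last m) := by
  simp only [funext_iff, MPL, mplCoeff, div_eq_inv_mul, implies_true]

lemma mplCoeff_snoc_one (k : Fin (m + 1) → ℕ) (n : MPLIdx (m + 1)) :
    mplCoeff (Fin.snoc k 1) n = mplCoeff k n.init / (n.1 (Fin.last (m + 1)) : ℂ) := by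
  simp only [mplCoeff, MPLIdx.init, Fin.init, Fin.prod_univ_castSucc (n := m + 1),
    Fin.snoc_castSucc, Fin.snoc_last, pow_one, mul_inv, div_eq_mul_inv]

lemma norm_mplCoeff_le_one (k : Fin (m + 1) → ℕ) (n : MPLIdx m) : ‖mplCoeff k n‖ ≤ 1 := by
  have hpos : 0 < ∏ i, n.1 i ^ k i := Finset.prod_pos fun i _ => pow_pos (n.2.2 i) _
  have hcast : mplCoeff k n = ((∏ i, n.1 i ^ k i : ℕ) : ℂ)⁻¹ := by
    simp only [mplCoeff, Nat.cast_prod, Nat.cast_pow]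
  rw [hcast, norm_inv, Complex.norm_natCast]
  exact inv_le_one_of_one_le₀ (Nat.one_le_cast.2 hpos)

lemma summable_norm_mplCoeff_mul_pow (k : Fin (m + 1) → ℕ) {r : ℝ} (hr₀ : 0 ≤ r) (hr₁ : r < 1) :
    Summable fun n : MPLIdx m => ‖mplCoeff k n‖ * r ^ n.1 (Fin.last m) :=
  (MPLIdx.summable_pow_last hr₀ hr₁ m).of_nonneg_of_le (fun _ => by positivity)
    fun n => mul_le_of_le_one_left (pow_nonneg hr₀ _) (norm_mplCoeff_le_one k n)

end Coefficients

/-- for positive integers `k₁,…,k_{m−1}` (here of depth `m+1`),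
appending a last index equal to `1`, at every `z` in the open unit disc
`d/dz Li_{k₁,…,k_{m−1},1}(z) = Li_{k₁,…,k_{m−1}}(z)/(1−z)`. -/
theorem mpl_hasDerivAt_of_last_eq_one (m : ℕ) (k : Fin (m + 1) → ℕ)
    (hk : ∀ i, 1 ≤ k i) :
    ∀ z : ℂ, ‖z‖ < 1 →
      HasDerivAt (MPL (m + 1) (Fin.snoc k 1)) (MPL m k z / (1 - z)) z := by
  intro z hz
  obtain ⟨r, hzr, hr⟩ := exists_between hz
  have hsum := summable_norm_mplCoeff_mul_pow k ((norm_nonneg z).trans hzr.le) hr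
  simpa only [MPL_eq_tsum_mplCoeff, mplCoeff_snoc_one] using
    mpl_hasDerivAt_of_last_eq_one_general hsum hr hzr
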